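/- arXiv:1809.10372 — 2 statements merged into one kernel-verified Lean document; each statement's English description precedes it below -/
import Mathlib

section
/- There exists an absolute constant C > 0 such that for every integer n ≥ 2, every real δ with 0 < δ ≤ 1, and every spanoid S on [n] = {1,...,n} that is a 2-LCS with error-tolerance δ, the rank of S satisfies rank(S) ≤ C · (1/δ) · log₂ n. -/
open scoped BigOperators

/-- A spanoid on ground set `X`: a set of inference rules `(A, i)`,
read as "`A` spans `i`". -/
abbrev SpanoidOn (X : Type) : Type := Set (Set X × X)

/-- The span of `T`: the smallest superset `T'` of `T` such that whenever `(A, i)` is a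
rule with `A ⊆ T'`, also `i ∈ T'`. -/
def sSpan {X : Type} (S : SpanoidOn X) (T : Set X) : Set X :=
  ⋂₀ {T' : Set X | T ⊆ T' ∧ ∀ p ∈ S, p.1 ⊆ T' → p.2 ∈ T'}

/-- The rank of a spanoid: the minimum size of a subset spanning the whole ground set. -/
noncomputable def sRank {X : Type} [Fintype X] (S : SpanoidOn X) : ℕ :=
  sInf {k : ℕ | ∃ T : Set X, T.ncard = k ∧ sSpan S T = Set.univ}

/-- A set is closed if it equals its own span. -/
def sClosed {X : Type} (S : SpanoidOn X) (B : Set X) : Prop := sSpan S B = B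

/-- A set is open if its complement is closed. -/
def sOpen {X : Type} (S : SpanoidOn X) (B : Set X) : Prop := sClosed S Bᶜ

/-- A code `C ⊆ K^X` is consistent with the spanoid `S` if for every rule `(A, i)` of `S`
there is a function `g` with `c i = g (c|_A)` for all codewords `c ∈ C`. -/
def sConsistent {X K : Type} (S : SpanoidOn X) (C : Set (X → K)) : Prop :=
  ∀ p ∈ S, ∃ g : (↥p.1 → K) → K, ∀ c ∈ C, c p.2 = g (fun a => c a.1)

/-- The functional rank of a spanoid: the supremum of `log |C| / log |Σ|` over all finite
alphabets `Σ` (of size at least 2) and all codes `C ⊆ Σ^X` consistent with `S`. -/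
noncomputable def sFrank {X : Type} (S : SpanoidOn X) : ℝ :=
  sSup {d : ℝ | ∃ m : ℕ, 2 ≤ m ∧ ∃ C : Set (X → Fin m),
    sConsistent S C ∧ d = Real.log (Nat.card C) / Real.log m}

/-- Feasibility for the entropy linear program of a spanoid. -/
def sEntFeasible {X : Type} (S : SpanoidOn X) (f : Set X → ℝ) : Prop :=
  f ∅ = 0 ∧ (∀ i : X, f {i} ≤ 1) ∧
  (∀ A B : Set X, f (A ∪ B) + f (A ∩ B) ≤ f A + f B) ∧
  (∀ A B : Set X, A ⊆ B → f A ≤ f B) ∧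
  (∀ A : Set X, ∀ i ∈ sSpan S A, f (A ∪ {i}) = f A)

/-- The optimum of the entropy linear program: maximize `f(X)` over feasible `f`. -/
noncomputable def sLPentropy {X : Type} (S : SpanoidOn X) : ℝ :=
  sSup {y : ℝ | ∃ f : Set X → ℝ, sEntFeasible S f ∧ y = f Set.univ}

/-- The optimum of the covering linear program: minimize `∑ i, x i` over `x ≥ 0` such that
`∑_{i ∈ B} x i ≥ 1` for every nonempty open set `B`. -/
noncomputable def sLPcover {X : Type} [Fintype X] (S : SpanoidOn X) : ℝ :=
  sInf {y : ℝ | ∃ x : X → ℝ, (∀ i, 0 ≤ x i) ∧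
    (∀ B : Set X, B.Nonempty → sOpen S B → 1 ≤ ∑ i, B.indicator x i) ∧
    y = ∑ i, x i}

/-- A spanoid on `[n]` is a `q`-LCS with error-tolerance `δ` if every `i` is spanned by at
least `δ n` pairwise disjoint `q`-element subsets. -/
def sIsLCS {n : ℕ} (q : ℕ) (δ : ℝ) (S : SpanoidOn (Fin n)) : Prop :=
  ∀ i : Fin n, ∃ M : Finset (Finset (Fin n)),
    δ * n ≤ (M.card : ℝ) ∧
    (∀ A ∈ M, A.card = q) ∧
    ((M : Set (Finset (Fin n))).Pairwise fun A B => Disjoint A B) ∧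
    ∀ A ∈ M, ((A : Set (Fin n)), i) ∈ S

/-!
Over a set `T`, order the ground set by `x ≤ y` when `T ∪ {y}` spans `x`, let `R` be cofinal, and
choose for every `x` a bound `f x ∈ R`. If `{a, b}` spans `j ∈ R` and `f b ≠ j`, then once `a` is
added to `T` the element `j` lies below another element of `R`, namely `f b`. The fibres of `f` are
disjoint, so summing over `j ∈ R` the number of `a` that work for `j` gives at least
`2 δ n |R| - n`, and some `a` works for `2 δ |R| - 1` elements of `R`. When `|R| ≥ 1 / δ` this is at
least `δ |R|`, and thinning `R` to a minimal cofinal set removes at least half of that many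
elements. After `O(log n / δ)` such steps `|R| ≤ 1 / δ`, and then `T ∪ R` spans everything.
-/

open Finset

lemma log_le_log_sub_of_le_one_sub_mul {x y c : ℝ} (hx : 0 < x) (hy : 0 < y)
    (h : x ≤ (1 - c) * y) : Real.log x ≤ Real.log y - c := by
  have hdiv : x / y ≤ 1 - c := (div_le_iff₀ hy).2 h
  have hlog : Real.log (x / y) ≤ x / y - 1 := Real.log_le_sub_one_of_pos (div_pos hx hy)
  rw [Real.log_div hx.ne' hy.ne'] at hlog
  linarith

section Cofinal

variable {α : Type*} [Preorder α]

lemma isAntichain_of_minimal_isCofinal {Q : Finset α}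
    (hQ : Minimal (fun s : Finset α ↦ IsCofinal (s : Set α)) Q) :
    IsAntichain (· ≤ ·) (Q : Set α) := by
  classical
  intro p hp q hq hpq hle
  have herase : IsCofinal (Q.erase p : Set α) := by
    intro x
    obtain ⟨y, hy, hxy⟩ := hQ.prop x
    by_cases hyp : y = p
    · exact ⟨q, mem_erase.2 ⟨hpq.symm, hq⟩, hxy.trans (hyp ▸ hle)⟩
    · exact ⟨y, mem_erase.2 ⟨hyp, hy⟩, hxy⟩
  exact notMem_erase p Q (hQ.le_of_le herase (erase_subset p Q) hp)

lemma exists_isCofinal_two_mul_card_add_card_le {R H : Finset α} (hR : IsCofinal (R : Set α))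
    (hHR : H ⊆ R) (hH : ∀ j ∈ H, ∃ p ∈ R, p ≠ j ∧ j ≤ p) :
    ∃ Q : Finset α, IsCofinal (Q : Set α) ∧ 2 * #Q + #H ≤ 2 * #R := by
  classical
  obtain ⟨Q, hQR, hQ⟩ := exists_minimal_le_of_wellFoundedLT
    (fun s : Finset α ↦ IsCofinal (s : Set α)) R hR
  have hanti := isAntichain_of_minimal_isCofinal hQ
  choose! p hpR hpne hle using hH
  have eq_of_le {j q : α} (hj : j ∈ Q ∩ H) (hq : q ∈ Q) (hjq : p j ≤ q) : j = q :=
    hanti.eq (mem_inter.1 hj).1 hq ((hle j (mem_inter.1 hj).2).trans hjq)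
  have hmaps : ∀ j ∈ Q ∩ H, p j ∈ R \ Q := fun j hj ↦
    mem_sdiff.2 ⟨hpR j (mem_inter.1 hj).2, fun hpQ ↦
      hpne j (mem_inter.1 hj).2 (eq_of_le hj hpQ le_rfl).symm⟩
  have hinj : Set.InjOn p (Q ∩ H : Finset α) := by
    intro j hj k hk hjk
    obtain ⟨q, hq, hjq⟩ := hQ.prop (p j)
    exact (eq_of_le hj hq hjq).trans (eq_of_le hk hq (hjk ▸ hjq)).symm
  have hinter : #(Q ∩ H) ≤ #(R \ Q) := card_le_card_of_injOn p hmaps hinj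
  have hdiff : #(Q \ H) ≤ #(R \ H) := card_le_card (sdiff_subset_sdiff hQR le_rfl)
  have hQH : #(Q ∩ H) + #(Q \ H) = #Q := card_inter_add_card_sdiff Q H
  have hRQ : #(R \ Q) + #Q = #R := card_sdiff_add_card_eq_card hQR
  have hRH : #(R \ H) + #H = #R := card_sdiff_add_card_eq_card hHR
  exact ⟨Q, hQ.prop, by lia⟩

end Cofinal

section Matching

variable {X : Type*} [DecidableEq X]

lemma exists_partners_two_mul_card_le {M : Finset (Finset X)} (hpair : ∀ A ∈ M, #A = 2)
    (hdisj : (M : Set (Finset X)).PairwiseDisjoint id) (P : Finset X) :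
    ∃ V : Finset X, (∀ a ∈ V, ∃ b ∉ P, {a, b} ∈ M) ∧ 2 * #M ≤ #V + #P := by
  have hunion : #(M.biUnion id) = 2 * #M := by
    rw [card_biUnion hdisj]
    exact (sum_const_nat hpair).trans (mul_comm _ _)
  have hpartner : ∀ b ∈ M.biUnion id, ∃ a, a ≠ b ∧ {a, b} ∈ M := by
    intro b hb
    obtain ⟨A, hA, hbA : b ∈ A⟩ := mem_biUnion.1 hb
    obtain ⟨a, ha⟩ : ∃ a, A.erase b = {a} := by
      rw [← card_eq_one, card_erase_of_mem hbA, hpair A hA]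
    refine ⟨a, ne_of_mem_erase (ha ▸ mem_singleton_self a), ?_⟩
    rwa [pair_comm, ← ha, insert_erase hbA]
  choose! g hg_ne hg using hpartner
  have hinj : Set.InjOn g (M.biUnion id) := by
    intro b hb c hc hbc
    have hpairs : ({g b, b} : Finset X) = {g c, c} :=
      hdisj.elim_finset (hg b hb) (hg c hc) (g b) (mem_insert_self _ _)
        (hbc ▸ mem_insert_self _ _)
    have hbmem : b ∈ ({g c, c} : Finset X) := hpairs ▸ mem_insert_of_mem (mem_singleton_self b)
    rcases mem_insert.1 hbmem with hbg | hbc'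
    · exact absurd (hbc.trans hbg.symm) (hg_ne b hb)
    · exact mem_singleton.1 hbc'
  refine ⟨(M.biUnion id \ P).image g, fun a ha ↦ ?_, ?_⟩
  · obtain ⟨b, hb, rfl⟩ := mem_image.1 ha
    obtain ⟨hbM, hbP⟩ := mem_sdiff.1 hb
    exact ⟨b, hbP, hg b hbM⟩
  · rw [← hunion, card_image_of_injOn (hinj.mono (coe_subset.2 sdiff_subset))]
    exact tsub_le_iff_right.1 (le_card_sdiff P (M.biUnion id))

lemma exists_subset_two_mul_card_sub_one_le {ι : Type*} [Fintype X] [Nonempty X]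
    {δ : ℝ} {M : ι → Finset (Finset X)} {R : Finset ι}
    (hcard : ∀ j ∈ R, δ * Fintype.card X ≤ #(M j)) (hpair : ∀ j ∈ R, ∀ A ∈ M j, #A = 2)
    (hdisj : ∀ j ∈ R, (M j : Set (Finset X)).PairwiseDisjoint id)
    {f : X → ι} (hf : ∀ x, f x ∈ R) :
    ∃ a, ∃ H ⊆ R, (∀ j ∈ H, ∃ b, f b ≠ j ∧ {a, b} ∈ M j) ∧ 2 * δ * #R - 1 ≤ #H := by
  classical
  have hpartners : ∀ j ∈ R, ∃ V : Finset X, (∀ a ∈ V, ∃ b, f b ≠ j ∧ {a, b} ∈ M j) ∧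
      2 * #(M j) ≤ #V + #{x | f x = j} := by
    intro j hj
    simpa only [mem_filter_univ] using
      exists_partners_two_mul_card_le (hpair j hj) (hdisj j hj) {x | f x = j}
  choose! V hV hVcard using hpartners
  have hVcard' : ∀ j ∈ R, 2 * (δ * Fintype.card X) - #{x | f x = j} ≤ (#(V j) : ℝ) := by
    intro j hj
    have hreal : 2 * (#(M j) : ℝ) ≤ #(V j) + #{x | f x = j} := mod_cast hVcard j hj
    linarith [hcard j hj]
  have hfibres : ∑ j ∈ R, #{x | f x = j} = Fintype.card X :=
    (card_eq_sum_card_fiberwise fun x _ ↦ hf x).symm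
  have hdouble : ∑ j ∈ R, #(V j) = ∑ a, #{j ∈ R | a ∈ V j} := by
    simpa only [bipartiteAbove, bipartiteBelow, filter_univ_mem] using
      sum_card_bipartiteAbove_eq_sum_card_bipartiteBelow (s := R) (t := univ) fun j a ↦ a ∈ V j
  have hsum : ∑ _a : X, (2 * δ * #R - 1) ≤ ∑ a, (#{j ∈ R | a ∈ V j} : ℝ) :=
    calc ∑ _a : X, (2 * δ * #R - 1)
      _ = ∑ j ∈ R, (2 * (δ * Fintype.card X) - #{x | f x = j}) := by
        rw [sum_sub_distrib (s := R), ← Nat.cast_sum, hfibres]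
        simp only [sum_const, card_univ, nsmul_eq_mul]
        ring
      _ ≤ ∑ j ∈ R, (#(V j) : ℝ) := sum_le_sum hVcard'
      _ = ∑ a, (#{j ∈ R | a ∈ V j} : ℝ) := mod_cast hdouble
  obtain ⟨a, -, ha⟩ := exists_le_of_sum_le univ_nonempty hsum
  refine ⟨a, {j ∈ R | a ∈ V j}, filter_subset _ R, fun j hj ↦ ?_, ha⟩
  obtain ⟨hjR, haV⟩ := mem_filter.1 hj
  exact hV j hjR a haV

end Matching

section Span

variable {X : Type} {S : SpanoidOn X} {T U : Set X}

lemma subset_sSpan : T ⊆ sSpan S T :=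
  Set.subset_sInter fun _ hV ↦ hV.1

lemma mem_sSpan_of_rule {A : Set X} {i : X} (hrule : (A, i) ∈ S) (hA : A ⊆ sSpan S T) :
    i ∈ sSpan S T :=
  fun V hV ↦ hV.2 _ hrule fun _ ha ↦ hA ha V hV

lemma sSpan_subset_sSpan (h : T ⊆ sSpan S U) : sSpan S T ⊆ sSpan S U :=
  fun _ hx V hV ↦ hx V ⟨fun _ ht ↦ h ht V hV, hV.2⟩

lemma sSpan_mono (h : T ⊆ U) : sSpan S T ⊆ sSpan S U :=
  sSpan_subset_sSpan (h.trans subset_sSpan)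

lemma sRank_le_ncard [Fintype X] (h : sSpan S T = Set.univ) : sRank S ≤ T.ncard :=
  Nat.sInf_le ⟨T, rfl, h⟩

/-- The preorder in which `x ≤ y` when `T` together with `y` spans `x`. It is a definition rather
than an instance because it depends on `S` and `T`. -/
abbrev spanPreorder (S : SpanoidOn X) (T : Set X) : Preorder X where
  le x y := x ∈ sSpan S (insert y T)
  le_refl x := subset_sSpan (Set.mem_insert x T)
  le_trans _ _ _ hxy hyz := sSpan_subset_sSpan
    (Set.insert_subset hyz ((Set.subset_insert _ T).trans subset_sSpan)) hxy

/-- `R` is cofinal for `spanPreorder S T`: every element is spanned by `T` together with a single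
element of `R`. -/
def IsCofinalOver (S : SpanoidOn X) (T R : Set X) : Prop :=
  @IsCofinal X (spanPreorder S T).toLE R

namespace IsCofinalOver

variable {R : Set X}

lemma univ : IsCofinalOver S T Set.univ :=
  @IsCofinal.univ X (spanPreorder S T)

lemma nonempty [Nonempty X] (hR : IsCofinalOver S T R) : R.Nonempty :=
  @IsCofinal.nonempty X (spanPreorder S T).toLE _ R hR

lemma mono_left (hR : IsCofinalOver S T R) (hTU : T ⊆ U) : IsCofinalOver S U R := fun x ↦
  let ⟨r, hr, hx⟩ := hR x
  ⟨r, hr, sSpan_mono (Set.insert_subset_insert hTU) hx⟩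

lemma sSpan_union_eq_univ (hR : IsCofinalOver S T R) : sSpan S (T ∪ R) = Set.univ :=
  Set.eq_univ_of_forall fun x ↦
    let ⟨_, hr, hx⟩ := hR x
    sSpan_mono (Set.insert_subset (Set.mem_union_right T hr) Set.subset_union_left) hx

end IsCofinalOver

end Span

section LCS

variable {n : ℕ} {δ : ℝ} {S : SpanoidOn (Fin n)} {T : Set (Fin n)} {R : Finset (Fin n)}

lemma IsCofinalOver.exists_insert (hS : sIsLCS 2 δ S) (hR : IsCofinalOver S T R)
    (hRδ : 1 ≤ δ * #R) :
    ∃ (a : Fin n) (Q : Finset (Fin n)), IsCofinalOver S (insert a T) Q ∧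
      (#Q : ℝ) ≤ (1 - δ / 2) * #R := by
  choose M hcard hpair hdisj hrule using hS
  choose f hfR hf using hR
  have hR_ne : #R ≠ 0 := fun h ↦ by norm_num [h] at hRδ
  have : Nonempty (Fin n) := (card_ne_zero.1 hR_ne).to_type
  obtain ⟨a, H, hHR, hH, hHcard⟩ := exists_subset_two_mul_card_sub_one_le (R := R)
    (fun j _ ↦ by simpa only [Fintype.card_fin] using hcard j) (fun j _ ↦ hpair j)
    (fun j _ ↦ hdisj j) hfR
  have habove : ∀ j ∈ H, ∃ p ∈ R, p ≠ j ∧ j ∈ sSpan S (insert p (insert a T)) := by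
    intro j hj
    obtain ⟨b, hbj, hab⟩ := hH j hj
    refine ⟨f b, hfR b, hbj, mem_sSpan_of_rule (hrule j _ hab) ?_⟩
    rw [coe_pair, Set.pair_subset_iff]
    exact ⟨subset_sSpan (Or.inr (Set.mem_insert a T)),
      sSpan_mono (Set.insert_subset_insert (Set.subset_insert a T)) (hf b)⟩
  have hR' : IsCofinalOver S (insert a T) R :=
    mono_left (fun x ↦ ⟨f x, hfR x, hf x⟩) (Set.subset_insert a T)
  obtain ⟨Q, hQ, hQcard⟩ := @exists_isCofinal_two_mul_card_add_card_le _
    (spanPreorder S (insert a T)) R H hR' hHR habove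
  refine ⟨a, Q, hQ, ?_⟩
  have hQcard_real : 2 * (#Q : ℝ) + #H ≤ 2 * #R := mod_cast hQcard
  linarith

lemma IsCofinalOver.sRank_le_add_log (hS : sIsLCS 2 δ S) (hδ : 0 < δ) (hR : IsCofinalOver S T R) :
    (sRank S : ℝ) ≤ T.ncard + 1 / δ + 2 / δ * Real.log #R := by
  induction hk : #R using Nat.strong_induction_on generalizing T R with
  | _ k ih =>
  subst hk
  rcases le_total (δ * #R) 1 with hsmall | hlarge
  · have hrank : sRank S ≤ T.ncard + #R := by
      rw [← Set.ncard_coe_finset R]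
      exact (sRank_le_ncard hR.sSpan_union_eq_univ).trans (Set.ncard_union_le T R)
    calc (sRank S : ℝ) ≤ T.ncard + #R := mod_cast hrank
      _ ≤ T.ncard + 1 / δ := by
        gcongr
        rwa [le_div_iff₀' hδ]
      _ ≤ T.ncard + 1 / δ + 2 / δ * Real.log #R :=
        le_add_of_nonneg_right (mul_nonneg (by positivity) (Real.log_natCast_nonneg _))
  · obtain ⟨a, Q, hQ, hQcard⟩ := hR.exists_insert hS hlarge
    have hRpos : (0 : ℝ) < #R := pos_of_mul_pos_right (by linarith) hδ.le
    have hlt : #Q < #R := by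
      have hshrink : (1 - δ / 2) * #R < (#R : ℝ) := by linarith
      exact_mod_cast hQcard.trans_lt hshrink
    have hQpos : (0 : ℝ) < #Q := by
      have : Nonempty (Fin n) := ⟨a⟩
      exact mod_cast card_pos.2 (coe_nonempty.1 hQ.nonempty)
    have hlog : Real.log #Q ≤ Real.log #R - δ / 2 :=
      log_le_log_sub_of_le_one_sub_mul hQpos hRpos hQcard
    have hinsert : ((insert a T).ncard : ℝ) ≤ T.ncard + 1 := mod_cast Set.ncard_insert_le a T
    calc (sRank S : ℝ) ≤ (insert a T).ncard + 1 / δ + 2 / δ * Real.log #Q := ih _ hlt hQ rfl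
      _ ≤ T.ncard + 1 + 1 / δ + 2 / δ * (Real.log #R - δ / 2) := by
        gcongr
      _ = T.ncard + 1 / δ + 2 / δ * Real.log #R := by
        field_simp
        ring

lemma sRank_le_of_sIsLCS_two (hS : sIsLCS 2 δ S) (hδ : 0 < δ) :
    (sRank S : ℝ) ≤ (1 + 2 * Real.log n) / δ := by
  have huniv : IsCofinalOver S ∅ (univ : Finset (Fin n)) := by
    rw [coe_univ]
    exact .univ
  have hrank := huniv.sRank_le_add_log hS hδ
  rw [Set.ncard_empty, card_fin] at hrank
  calc (sRank S : ℝ) ≤ (0 : ℕ) + 1 / δ + 2 / δ * Real.log n := hrank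
    _ = (1 + 2 * Real.log n) / δ := by push_cast; ring

end LCS

/-- Every 2-LCS with error-tolerance `δ` on `[n]` has rank at most
`C · (1/δ) · log₂ n` for an absolute constant `C > 0`. -/
theorem two_LCS_rank_upper_bound :
    ∃ C : ℝ, 0 < C ∧ ∀ n : ℕ, 2 ≤ n → ∀ δ : ℝ, 0 < δ → δ ≤ 1 →
      ∀ S : SpanoidOn (Fin n), sIsLCS 2 δ S →
        (sRank S : ℝ) ≤ C * (1 / δ) * Real.logb 2 n := by
  refine ⟨3, by norm_num, fun n hn δ hδ _ S hS ↦ ?_⟩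
  have hn2 : (2 : ℝ) ≤ n := mod_cast hn
  have hlogb : 1 ≤ Real.logb 2 n := by
    rw [Real.le_logb_iff_rpow_le one_lt_two (by linarith), Real.rpow_one]
    exact hn2
  have hlog : Real.log n ≤ Real.logb 2 n := by
    rw [Real.logb, le_div_iff₀ (Real.log_pos one_lt_two)]
    exact mul_le_of_le_one_right (Real.log_natCast_nonneg n) (by linarith [Real.log_two_lt_d9])
  calc (sRank S : ℝ) ≤ (1 + 2 * Real.log n) / δ := sRank_le_of_sIsLCS_two hS hδ
    _ ≤ 3 * Real.logb 2 n / δ := by gcongr; linarith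
    _ = 3 * (1 / δ) * Real.logb 2 n := by ring
end

section
/- There exist absolute constants c, C > 0 such that for every integer n ≥ 4 and every spanoid S on [n], there exist a finite alphabet Σ with log₂|Σ| ≤ C · log₂ n / log₂ log₂ n and a code C' ⊆ Σ^n consistent with S whose dimension satisfies dim(C') ≥ c · (log₂ log₂ n / log₂ n) · LP^cover(S). -/
open scoped BigOperators

/-! Choosing the lightest open set for the weights `(1 + a) ^ coverage` is a multiplicative-weights
strategy against the covering program: each choice multiplies the total weight by at most
`1 + a / L`, with `L` the optimum of the program. Hence some `⌈L⌉` nonempty open sets cover every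
coordinate only `O(log n / log log n)` times, once `a = log₂ n`. Attach one free bit to each of
these sets and write at every coordinate the bits of the sets containing it. The resulting code is
consistent, because the premises of a rule concluding inside an open set must meet that set. -/

theorem sOpen.inter_nonempty {X : Type} {S : SpanoidOn X} {B : Set X} (hB : sOpen S B)
    {p : Set X × X} (hp : p ∈ S) (hpB : p.2 ∈ B) : (p.1 ∩ B).Nonempty := by
  rw [← Set.not_disjoint_iff_nonempty_inter]
  intro hdisj
  have hspan : p.2 ∈ sSpan S Bᶜ :=
    fun T hT => hT.2 p hp (hdisj.subset_compl_right.trans hT.1)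
  rw [show sSpan S Bᶜ = Bᶜ from hB] at hspan
  exact hspan hpB

section Covers

variable {X : Type} [Fintype X] {S : SpanoidOn X} {x w : X → ℝ}

/-- Feasible points of the covering linear program of `S`, whose optimal value is `sLPcover S`. -/
def IsFractionalCover (S : SpanoidOn X) (x : X → ℝ) : Prop :=
  (∀ i, 0 ≤ x i) ∧ ∀ B : Set X, B.Nonempty → sOpen S B → 1 ≤ ∑ i, B.indicator x i

theorem isFractionalCover_one (S : SpanoidOn X) : IsFractionalCover S 1 := by
  refine ⟨fun _ => zero_le_one, fun B ⟨b, hb⟩ _ => ?_⟩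
  calc (1 : ℝ) = B.indicator 1 b := by simp [hb]
    _ ≤ ∑ i, B.indicator 1 i :=
      Finset.single_le_sum (fun i _ => Set.indicator_nonneg (fun _ _ => zero_le_one) i)
        (Finset.mem_univ b)

theorem sLPcover_le_sum (hx : IsFractionalCover S x) : sLPcover S ≤ ∑ i, x i := by
  refine csInf_le ⟨0, ?_⟩ ⟨x, hx.1, hx.2, rfl⟩
  rintro _ ⟨y, hy, -, rfl⟩
  exact Finset.sum_nonneg fun i _ => hy i

theorem le_sLPcover {r : ℝ} (h : ∀ x, IsFractionalCover S x → r ≤ ∑ i, x i) :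
    r ≤ sLPcover S := by
  have hone := isFractionalCover_one S
  refine le_csInf ⟨_, 1, hone.1, hone.2, rfl⟩ ?_
  rintro _ ⟨x, hx, hcover, rfl⟩
  exact h x ⟨hx, hcover⟩

theorem sLPcover_nonneg (S : SpanoidOn X) : 0 ≤ sLPcover S :=
  le_sLPcover fun _ hx => Finset.sum_nonneg fun i _ => hx.1 i

theorem exists_nonempty_sOpen (hS : 0 < sLPcover S) : ∃ B : Set X, B.Nonempty ∧ sOpen S B := by
  by_contra! hempty
  have hzero : IsFractionalCover S 0 :=
    ⟨fun _ => le_rfl, fun B hne hB => absurd hB (hempty B hne)⟩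
  exact hS.not_ge (by simpa using sLPcover_le_sum hzero)

theorem one_le_sLPcover (hS : 0 < sLPcover S) : 1 ≤ sLPcover S := by
  obtain ⟨B, hne, hB⟩ := exists_nonempty_sOpen hS
  exact le_sLPcover fun x hx => (hx.2 B hne hB).trans <|
    Finset.sum_le_sum fun i _ => Set.indicator_le_self' (fun _ _ => hx.1 i) i

theorem sLPcover_mul_le_sum (hw : ∀ i, 0 ≤ w i) {μ : ℝ}
    (h : ∀ B : Set X, B.Nonempty → sOpen S B → μ ≤ ∑ i, B.indicator w i) :
    sLPcover S * μ ≤ ∑ i, w i := by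
  rcases le_or_gt μ 0 with hμ | hμ
  · exact (mul_nonpos_of_nonneg_of_nonpos (sLPcover_nonneg S) hμ).trans
      (Finset.sum_nonneg fun i _ => hw i)
  have hcover : IsFractionalCover S fun i => μ⁻¹ * w i := by
    refine ⟨fun i => mul_nonneg (inv_nonneg.2 hμ.le) (hw i), fun B hne hB => ?_⟩
    simp only [Set.indicator_const_mul]
    rw [← Finset.mul_sum, inv_mul_eq_div, one_le_div hμ]
    exact h B hne hB
  have hle := sLPcover_le_sum hcover
  rwa [← Finset.mul_sum, inv_mul_eq_div, le_div_iff₀ hμ] at hle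

theorem exists_sOpen_sLPcover_mul_sum_le (hS : 0 < sLPcover S) (hw : ∀ i, 0 ≤ w i) :
    ∃ B : Set X, B.Nonempty ∧ sOpen S B ∧
      sLPcover S * ∑ i, B.indicator w i ≤ ∑ i, w i := by
  obtain ⟨B, ⟨hne, hB⟩, hmin⟩ := Set.exists_min_image
    {B : Set X | B.Nonempty ∧ sOpen S B} (fun B => ∑ i, B.indicator w i)
    (Set.toFinite _) (exists_nonempty_sOpen hS)
  exact ⟨B, hne, hB, sLPcover_mul_le_sum hw fun B' hne' hB' => hmin B' ⟨hne', hB'⟩⟩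

end Covers

section Coverage

open Classical in
/-- The number of members, counted with multiplicity, of the family `B` that contain `i`. It bounds
the number of message symbols that have to be stored at coordinate `i`. -/
noncomputable def coverage {ι X : Type*} [Fintype ι] (B : ι → Set X) (i : X) : ℕ :=
  Finset.card {j | i ∈ B j}

open Classical in
theorem coverage_cons {X : Type*} {k : ℕ} (B₀ : Set X) (B : Fin k → Set X) (i : X) :
    coverage (Fin.cons B₀ B : Fin (k + 1) → Set X) i =
      if i ∈ B₀ then coverage B i + 1 else coverage B i :=
  Fin.card_filter_univ_succ _

theorem pow_coverage_cons {X R : Type*} [CommSemiring R] {k : ℕ} (a : R) (B₀ : Set X)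
    (B : Fin k → Set X) (i : X) :
    (1 + a) ^ coverage (Fin.cons B₀ B : Fin (k + 1) → Set X) i =
      (1 + a) ^ coverage B i + a * B₀.indicator (fun i => (1 + a) ^ coverage B i) i := by
  by_cases hi : i ∈ B₀
  · rw [coverage_cons, if_pos hi, Set.indicator_of_mem hi]
    ring
  · rw [coverage_cons, if_neg hi, Set.indicator_of_notMem hi, mul_zero, add_zero]

variable {X : Type} [Fintype X] {S : SpanoidOn X} {a : ℝ}

theorem exists_sOpen_sum_pow_coverage_le (hS : 0 < sLPcover S) (ha : 0 ≤ a) (k : ℕ) :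
    ∃ B : Fin k → Set X, (∀ j, (B j).Nonempty ∧ sOpen S (B j)) ∧
      ∑ i, (1 + a) ^ coverage B i ≤ Fintype.card X * (1 + a / sLPcover S) ^ k := by
  induction k with
  | zero => exact ⟨Fin.elim0, fun j => j.elim0, by simp [coverage]⟩
  | succ k ih =>
    obtain ⟨B, hB, hsum⟩ := ih
    set w : X → ℝ := fun i => (1 + a) ^ coverage B i
    obtain ⟨B₀, hne, hopen, hlight⟩ :=
      exists_sOpen_sLPcover_mul_sum_le (w := w) hS fun i => by positivity
    refine ⟨Fin.cons B₀ B, Fin.cons ⟨hne, hopen⟩ hB, ?_⟩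
    calc ∑ i, (1 + a) ^ coverage (Fin.cons B₀ B : Fin (k + 1) → Set X) i
        = ∑ i, w i + a * ∑ i, B₀.indicator w i := by
          simp only [pow_coverage_cons, Finset.sum_add_distrib, Finset.mul_sum, w]
      _ ≤ ∑ i, w i + a * ((∑ i, w i) / sLPcover S) := by
          gcongr
          rwa [le_div_iff₀' hS]
      _ = (∑ i, w i) * (1 + a / sLPcover S) := by ring
      _ ≤ Fintype.card X * (1 + a / sLPcover S) ^ k * (1 + a / sLPcover S) := by gcongr
      _ = Fintype.card X * (1 + a / sLPcover S) ^ (k + 1) := by ring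

theorem exists_sOpen_coverage_mul_log_le (hS : 0 < sLPcover S) (ha : 0 ≤ a) (k : ℕ) :
    ∃ B : Fin k → Set X, (∀ j, (B j).Nonempty ∧ sOpen S (B j)) ∧
      ∀ i, coverage B i * Real.log (1 + a) ≤
        Real.log (Fintype.card X) + k * (a / sLPcover S) := by
  obtain ⟨B, hB, hsum⟩ := exists_sOpen_sum_pow_coverage_le hS ha k
  refine ⟨B, hB, fun i => ?_⟩
  have hcard : (Fintype.card X : ℝ) ≠ 0 := by
    exact_mod_cast (Fintype.card_pos_iff.2 ⟨i⟩).ne'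
  have hbase : 0 < 1 + a / sLPcover S := by positivity
  have hpow : (1 + a) ^ coverage B i ≤ Fintype.card X * (1 + a / sLPcover S) ^ k :=
    (Finset.single_le_sum (f := fun i => (1 + a) ^ coverage B i)
      (fun _ _ => by positivity) (Finset.mem_univ i)).trans hsum
  calc coverage B i * Real.log (1 + a)
      = Real.log ((1 + a) ^ coverage B i) := (Real.log_pow _ _).symm
    _ ≤ Real.log (Fintype.card X * (1 + a / sLPcover S) ^ k) :=
        Real.log_le_log (by positivity) hpow
    _ = Real.log (Fintype.card X) + k * Real.log (1 + a / sLPcover S) := by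
        rw [Real.log_mul hcard (by positivity), Real.log_pow]
    _ ≤ Real.log (Fintype.card X) + k * (a / sLPcover S) := by
        gcongr
        linarith [Real.log_le_sub_one_of_pos hbase]

theorem exists_sOpen_ceil_sLPcover_coverage_mul_log_le (S : SpanoidOn X) (ha : 0 ≤ a) :
    ∃ B : Fin ⌈sLPcover S⌉₊ → Set X, (∀ j, (B j).Nonempty ∧ sOpen S (B j)) ∧
      ∀ i, coverage B i * Real.log (1 + a) ≤ Real.log (Fintype.card X) + 2 * a := by
  rcases (sLPcover_nonneg S).eq_or_lt with hS | hS
  · have : IsEmpty (Fin ⌈sLPcover S⌉₊) := by rw [← hS, Nat.ceil_zero]; infer_instance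
    refine ⟨isEmptyElim, isEmptyElim, fun i => ?_⟩
    have := Real.log_natCast_nonneg (Fintype.card X)
    simp only [coverage, Finset.univ_eq_empty, Finset.filter_empty, Finset.card_empty,
      Nat.cast_zero, zero_mul]
    positivity
  · obtain ⟨B, hB, hcov⟩ := exists_sOpen_coverage_mul_log_le hS ha ⌈sLPcover S⌉₊
    have hceil : (⌈sLPcover S⌉₊ : ℝ) ≤ 2 * sLPcover S :=
      Nat.ceil_le_two_mul (by linarith [one_le_sLPcover hS])
    refine ⟨B, hB, fun i => (hcov i).trans ((add_le_add_iff_left _).2 ?_)⟩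
    calc ⌈sLPcover S⌉₊ * (a / sLPcover S) ≤ 2 * sLPcover S * (a / sLPcover S) := by gcongr
      _ = 2 * a := by field_simp

end Coverage

section Codes

theorem sConsistent_of_eqOn {X K : Type} [Nonempty K] {S : SpanoidOn X} {C : Set (X → K)}
    (h : ∀ p ∈ S, ∀ c ∈ C, ∀ c' ∈ C, Set.EqOn c c' p.1 → c p.2 = c' p.2) :
    sConsistent S C := by
  intro p hp
  have hfactors : Function.FactorsThrough (fun c : C => c.1 p.2)
      (fun c a => c.1 a.1 : C → p.1 → K) :=
    fun c c' hcc' => h p hp c c.2 c' c'.2 fun a ha => congrFun hcc' ⟨a, ha⟩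
  obtain ⟨g, hg⟩ := (Function.factorsThrough_iff _).1 hfactors
  exact ⟨g, fun c hc => congrFun hg ⟨c, hc⟩⟩

/-- The encoder storing at coordinate `i` those message symbols `m j` with `i ∈ B j`, packed into
a single symbol of `K` by `e i`. -/
def broadcast {ι X K Q : Type*} (B : ι → Set X) (e : ∀ i, ({j // i ∈ B j} → Q) ↪ K)
    (m : ι → Q) (i : X) : K :=
  e i fun j => m j

section

variable {ι X K Q : Type*} {B : ι → Set X} {e : ∀ i, ({j // i ∈ B j} → Q) ↪ K}

theorem broadcast_apply_eq_iff {m m' : ι → Q} {i : X} :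
    broadcast B e m i = broadcast B e m' i ↔ ∀ j, i ∈ B j → m j = m' j := by
  simp only [broadcast, (e i).apply_eq_iff_eq, funext_iff, Subtype.forall]

theorem broadcast_injective (hB : ∀ j, (B j).Nonempty) :
    Function.Injective (broadcast B e) := by
  intro m m' h
  funext j
  obtain ⟨i, hi⟩ := hB j
  exact broadcast_apply_eq_iff.1 (congrFun h i) j hi

end

theorem sConsistent_range_broadcast {ι Q : Type*} {X K : Type} [Nonempty K] {S : SpanoidOn X}
    {B : ι → Set X} (hB : ∀ j, sOpen S (B j)) (e : ∀ i, ({j // i ∈ B j} → Q) ↪ K) :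
    sConsistent S (Set.range (broadcast B e)) := by
  refine sConsistent_of_eqOn ?_
  rintro p hp _ ⟨m, rfl⟩ _ ⟨m', rfl⟩ heq
  refine broadcast_apply_eq_iff.2 fun j hj => ?_
  obtain ⟨a, hap, haB⟩ := (hB j).inter_nonempty hp hj
  exact broadcast_apply_eq_iff.1 (heq hap) j haB

theorem exists_sConsistent_card_eq_pow {ι : Type*} {X : Type} [Fintype ι] {S : SpanoidOn X}
    {B : ι → Set X} (hB : ∀ j, (B j).Nonempty ∧ sOpen S (B j)) {d : ℕ}
    (hd : ∀ i, coverage B i ≤ d) (q : ℕ) [NeZero q] :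
    ∃ C : Set (X → Fin (q ^ d)), sConsistent S C ∧ Nat.card C = q ^ Fintype.card ι := by
  classical
  have hpack (i : X) : Nonempty (({j // i ∈ B j} → Fin q) ↪ Fin (q ^ d)) := by
    refine Function.Embedding.nonempty_of_card_le ?_
    rw [Fintype.card_fun, Fintype.card_fin, Fintype.card_fin, Fintype.card_subtype]
    exact Nat.pow_le_pow_right (NeZero.pos q) (hd i)
  have e (i : X) := (hpack i).some
  refine ⟨_, sConsistent_range_broadcast (fun j => (hB j).2) e, ?_⟩
  rw [Nat.card_range_of_injective (broadcast_injective fun j => (hB j).1)]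
  simp

end Codes

section Logarithms

open Real

theorem logb_two_le_four_mul {x : ℝ} (hx : 0 ≤ x) : logb 2 x ≤ 4 * x := by
  rw [logb, div_le_iff₀ (log_pos one_lt_two)]
  nlinarith [log_le_self hx, log_two_gt_d9]

theorem one_lt_logb_two {x : ℝ} (hx : 2 < x) : 1 < logb 2 x := by
  rwa [lt_logb_iff_rpow_lt one_lt_two (by linarith), rpow_one]

theorem le_four_mul_logb_div_logb_logb {t x : ℝ} (ht : 0 ≤ t) (hx : 2 < x)
    (h : t * log (1 + logb 2 x) ≤ log x + 2 * logb 2 x) :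
    t ≤ 4 * logb 2 x / logb 2 (logb 2 x) := by
  have hlog : 1 < logb 2 x := one_lt_logb_two hx
  have hlog2 : 0 < log 2 := log_pos one_lt_two
  rw [le_div_iff₀ (logb_pos one_lt_two hlog)]
  refine le_of_mul_le_mul_right ?_ hlog2
  calc t * logb 2 (logb 2 x) * log 2 = t * log (logb 2 x) := by
        rw [mul_assoc, logb, div_mul_cancel₀ _ hlog2.ne']
    _ ≤ t * log (1 + logb 2 x) := by gcongr; linarith
    _ ≤ log x + 2 * logb 2 x := h
    _ = logb 2 x * log 2 + 2 * logb 2 x := by rw [logb, div_mul_cancel₀ _ hlog2.ne']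
    _ ≤ logb 2 x * log 2 + 3 * log 2 * logb 2 x := by
        gcongr
        linarith [log_two_gt_d9]
    _ = 4 * logb 2 x * log 2 := by ring

end Logarithms

theorem small_alphabet_consistent_code_general {X : Type} [Fintype X]
    (hX : 2 < Fintype.card X) (S : SpanoidOn X) :
    ∃ m : ℕ, 2 ≤ m ∧
      Real.logb 2 m ≤
        4 * Real.logb 2 (Fintype.card X) / Real.logb 2 (Real.logb 2 (Fintype.card X)) ∧
      ∃ C : Set (X → Fin m), sConsistent S C ∧
        1 / 4 * (Real.logb 2 (Real.logb 2 (Fintype.card X)) / Real.logb 2 (Fintype.card X)) *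
          sLPcover S ≤ Real.log (Nat.card C) / Real.log m := by
  have hX' : (2 : ℝ) < Fintype.card X := by exact_mod_cast hX
  set a := Real.logb 2 (Fintype.card X)
  set l := Real.logb 2 a
  have ha : 0 < a := one_pos.trans (one_lt_logb_two hX')
  have hl : 0 < l := Real.logb_pos one_lt_two (one_lt_logb_two hX')
  set d := ⌊4 * a / l⌋₊
  have hd : (d : ℝ) ≤ 4 * a / l := Nat.floor_le (by positivity)
  have hd_pos : 0 < d := Nat.floor_pos.2 ((one_le_div hl).2 (logb_two_le_four_mul ha.le))
  obtain ⟨B, hB, hcov⟩ := exists_sOpen_ceil_sLPcover_coverage_mul_log_le S ha.le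
  have hcov_le (i : X) : coverage B i ≤ d :=
    Nat.le_floor (le_four_mul_logb_div_logb_logb (Nat.cast_nonneg _) hX' (hcov i))
  obtain ⟨C, hC, hcard⟩ := exists_sConsistent_card_eq_pow hB hcov_le 2
  refine ⟨2 ^ d, le_self_pow₀ one_le_two hd_pos.ne', by simpa [Real.logb_pow] using hd,
    C, hC, ?_⟩
  calc 1 / 4 * (l / a) * sLPcover S = sLPcover S / (4 * a / l) := by field_simp
    _ ≤ ⌈sLPcover S⌉₊ / d := by gcongr; exact Nat.le_ceil _
    _ = Real.log (Nat.card C) / Real.log (2 ^ d : ℕ) := by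
      rw [hcard, Fintype.card_fin, Nat.cast_pow, Nat.cast_pow, Nat.cast_ofNat, Real.log_pow,
        Real.log_pow, mul_div_mul_right _ _ (Real.log_pos one_lt_two).ne']

/-- For every spanoid `S` on `[n]` (`n ≥ 4`) there is a consistent code over an
alphabet with `log₂|Σ| ≤ C · log₂ n / log₂ log₂ n` of dimension at least
`c · (log₂ log₂ n / log₂ n) · LP^cover(S)`. -/
theorem small_alphabet_consistent_code :
    ∃ c C : ℝ, 0 < c ∧ 0 < C ∧ ∀ n : ℕ, 4 ≤ n → ∀ S : SpanoidOn (Fin n),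
      ∃ m : ℕ, 2 ≤ m ∧
        Real.logb 2 m ≤ C * Real.logb 2 n / Real.logb 2 (Real.logb 2 n) ∧
        ∃ C' : Set (Fin n → Fin m), sConsistent S C' ∧
          c * (Real.logb 2 (Real.logb 2 n) / Real.logb 2 n) * sLPcover S ≤
            Real.log (Nat.card C') / Real.log m := by
  refine ⟨1 / 4, 4, by norm_num, by norm_num, fun n hn S => ?_⟩
  simpa only [Fintype.card_fin] using
    small_alphabet_consistent_code_general (by rw [Fintype.card_fin]; lia) S
end
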